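/- Let f ∈ 𝒮(S^m) be a symmetric m-tensor field on ℝⁿ with Schwartz components, let 1 ≤ k ≤ min{n−1, m}, and for each y ≠ 0 let ĝ(y) ∈ S^m(ℝⁿ) and v̂(y) ∈ S^{m−k}(ℝⁿ) be determined by the pointwise decomposition f̂(y) = ĝ(y) + i_{y^{⊗k}} v̂(y), j_{y^{⊗k}} ĝ(y) = 0, where f̂ is the componentwise Fourier transform of f. Then ĝ and v̂ are smooth on ℝⁿ∖{0} and rapidly decaying as |y| → ∞, and for every multi-index α there is a constant C_α such that |D^α ĝ(y)| ≤ C_α |y|^{−|α|} and |D^α v̂(y)| ≤ C_α |y|^{−|α|−k} for all 0 < |y| ≤ 1. -/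

import Mathlib

noncomputable section

open MeasureTheory Filter
open scoped RealInnerProductSpace BigOperators

/-- `ℝⁿ` with the Euclidean structure. -/
abbrev En (n : ℕ) := EuclideanSpace ℝ (Fin n)

/-- A symmetric `m`-tensor on `ℝⁿ` (pointwise): a family of reals indexed by
`(i₁,…,i_m)`, invariant under permutations of the indices. -/
def IsSymTensor {n m : ℕ} (F : (Fin m → Fin n) → ℝ) : Prop :=
  ∀ (π : Equiv.Perm (Fin m)) (i : Fin m → Fin n), F (i ∘ π) = F i

/-- A symmetric `m`-tensor field on `ℝⁿ`. -/
def IsSymField {n m : ℕ} (f : (Fin m → Fin n) → En n → ℝ) : Prop :=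
  ∀ (π : Equiv.Perm (Fin m)) (i : Fin m → Fin n), f (i ∘ π) = f i

/-- All components of the field are Schwartz functions. -/
def IsSchwartzField {n m : ℕ} (f : (Fin m → Fin n) → En n → ℝ) : Prop :=
  ∀ i, ∃ φ : SchwartzMap (En n) ℝ, ⇑φ = f i

/-- Symmetrization `σ` of a tensor: average over all permutations of the indices. -/
def symz {n m : ℕ} {α : Type*} [AddCommMonoid α] [Module ℝ α]
    (F : (Fin m → Fin n) → α) : (Fin m → Fin n) → α :=
  fun i => ((m.factorial : ℝ))⁻¹ • ∑ π : Equiv.Perm (Fin m), F (i ∘ π)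

/-- The `q`-th momentum ray transform
`(J^q f)(x,ξ) = ∫ t^q f_{i₁…i_m}(x+tξ) ξ^{i₁}⋯ξ^{i_m} dt`, as a function on all of
`ℝⁿ × ℝⁿ`; its restriction to `TSⁿ⁻¹ = {|ξ|=1, ⟨x,ξ⟩=0}` is `I^q f`. -/
def momRT {n m : ℕ} (q : ℕ) (f : (Fin m → Fin n) → En n → ℝ) (x ξ : En n) : ℝ :=
  ∫ t : ℝ, t ^ q * ∑ i : Fin m → Fin n, f i (x + t • ξ) * ∏ r, ξ (i r)

/-- Coordinate partial derivative `∂/∂x^j`. -/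
def pd {n : ℕ} (j : Fin n) (u : En n → ℝ) : En n → ℝ :=
  fun x => fderiv ℝ u x (EuclideanSpace.single j 1)

/-- Inner differentiation (symmetrized derivative) `d`. -/
def dsym {n m : ℕ} (u : (Fin m → Fin n) → En n → ℝ) :
    (Fin (m + 1) → Fin n) → En n → ℝ :=
  symz (fun i => pd (i (Fin.last m)) (u (fun s => i s.castSucc)))

/-- Iterated inner differentiation `d^k`. -/
def dpow {n m : ℕ} : (k : ℕ) → ((Fin m → Fin n) → En n → ℝ) →
    (Fin (m + k) → Fin n) → En n → ℝ
  | 0, u => u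
  | k + 1, u => dsym (dpow k u)

/-- Divergence `δ`. -/
def divg {n m : ℕ} (u : (Fin (m + 1) → Fin n) → En n → ℝ) :
    (Fin m → Fin n) → En n → ℝ :=
  fun i x => ∑ j : Fin n, pd j (u (Fin.snoc i j)) x

/-- Iterated divergence `δ^k`. -/
def divpow {n : ℕ} : (k : ℕ) → {p : ℕ} → ((Fin (p + k) → Fin n) → En n → ℝ) →
    (Fin p → Fin n) → En n → ℝ
  | 0, _, u => u
  | k + 1, _, u => divpow k (divg u)

/-- Partial derivative `∂/∂x^j` in the first slot of a function of `(x, ξ)`. -/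
def pdx {n : ℕ} (j : Fin n) (F : En n → En n → ℝ) : En n → En n → ℝ :=
  fun x ξ => fderiv ℝ (fun x' => F x' ξ) x (EuclideanSpace.single j 1)

/-- Partial derivative `∂/∂ξ^j` in the second slot of a function of `(x, ξ)`. -/
def pdxi {n : ℕ} (j : Fin n) (F : En n → En n → ℝ) : En n → En n → ℝ :=
  fun x ξ => fderiv ℝ (fun ξ' => F x ξ') ξ (EuclideanSpace.single j 1)

/-- Iterated `∂x` derivatives along a list of indices. -/
def pdxList {n : ℕ} (l : List (Fin n)) (F : En n → En n → ℝ) : En n → En n → ℝ :=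
  l.foldr pdx F

/-- Iterated `∂ξ` derivatives along a list of indices. -/
def pdxiList {n : ℕ} (l : List (Fin n)) (F : En n → En n → ℝ) : En n → En n → ℝ :=
  l.foldr pdxi F

/-- The John operator `J_{ij} = ∂²/∂x^i∂ξ^j − ∂²/∂x^j∂ξ^i`. -/
def johnOp {n : ℕ} (i j : Fin n) (F : En n → En n → ℝ) : En n → En n → ℝ :=
  fun x ξ => pdx i (pdxi j F) x ξ - pdx j (pdxi i F) x ξ

/-- Iterated John operators `J_{i₁j₁} ⋯ J_{i_r j_r}`. -/
def johnIter {n : ℕ} (l : List (Fin n × Fin n)) (F : En n → En n → ℝ) : En n → En n → ℝ :=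
  l.foldr (fun ij G => johnOp ij.1 ij.2 G) F

/-- Sharafutdinov's Schwartz space `𝒮(TSⁿ⁻¹)`: a function on
`TSⁿ⁻¹ = {(x,ξ) : |ξ|=1, ⟨x,ξ⟩=0}` is Schwartz iff it is the restriction of a
Schwartz function on `ℝⁿ × ℝⁿ`. -/
def IsSchwartzOnTS {n : ℕ} (φ : En n → En n → ℝ) : Prop :=
  ∃ Φ : SchwartzMap (En n × En n) ℝ, ∀ x ξ : En n, ‖ξ‖ = 1 → ⟪x, ξ⟫ = 0 → φ x ξ = Φ (x, ξ)

/-- Symmetric multiplication `i_{x^{⊗k}} : S^m → S^{m+k}`. -/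
def iPowTens {n m k : ℕ} (x : En n) (V : (Fin m → Fin n) → ℝ) :
    (Fin (m + k) → Fin n) → ℝ :=
  symz (fun i => (∏ r : Fin k, x (i (Fin.natAdd m r))) * V (fun s => i (Fin.castAdd k s)))

/-- Convolution (contraction) `j_{x^{⊗k}} : S^{m+k} → S^m`. -/
def jPowTens {n m k : ℕ} (x : En n) (F : (Fin (m + k) → Fin n) → ℝ) :
    (Fin m → Fin n) → ℝ :=
  fun i => ∑ j : Fin k → Fin n, (∏ r, x (j r)) * F (Fin.append i j)

/-- Complex symmetric multiplication `i_{x^{⊗k}}`. -/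
def iPowTensC {n m k : ℕ} (x : En n) (V : (Fin m → Fin n) → ℂ) :
    (Fin (m + k) → Fin n) → ℂ :=
  symz (fun i => (∏ r : Fin k, (x (i (Fin.natAdd m r)) : ℂ)) * V (fun s => i (Fin.castAdd k s)))

/-- Complex convolution `j_{x^{⊗k}}`. -/
def jPowTensC {n m k : ℕ} (x : En n) (F : (Fin (m + k) → Fin n) → ℂ) :
    (Fin m → Fin n) → ℂ :=
  fun i => ∑ j : Fin k → Fin n, (∏ r, (x (j r) : ℂ)) * F (Fin.append i j)

/-- Complex symmetric tensor. -/
def IsSymTensorC {n m : ℕ} (F : (Fin m → Fin n) → ℂ) : Prop :=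
  ∀ (π : Equiv.Perm (Fin m)) (i : Fin m → Fin n), F (i ∘ π) = F i

/-- Complex coordinate partial derivative. -/
def pdC {n : ℕ} (j : Fin n) (u : En n → ℂ) : En n → ℂ :=
  fun x => fderiv ℝ u x (EuclideanSpace.single j 1)

/-- `D_j = −i∂_j` applied along a list of coordinates. -/
def DopList {n : ℕ} (l : List (Fin n)) (u : En n → ℂ) : En n → ℂ :=
  l.foldr (fun j v => fun x => (-Complex.I) * pdC j v x) u

/-- Canonical list of coordinates attached to a multi-index `α`. -/
def mIdxList {n : ℕ} (α : Fin n → ℕ) : List (Fin n) :=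
  (List.finRange n).flatMap (fun j => List.replicate (α j) j)

/-- `D^α = (−i)^{|α|} ∂^α`. -/
def Dpow {n : ℕ} (α : Fin n → ℕ) (u : En n → ℂ) : En n → ℂ :=
  DopList (mIdxList α) u

/-- Euclidean norm of a complex tensor. -/
def tensNormC {n m : ℕ} (F : (Fin m → Fin n) → ℂ) : ℝ :=
  Real.sqrt (∑ i, ‖F i‖ ^ 2)

/-- Fourier transform with the convention `(2π)^{-n/2} ∫ e^{-i⟨x,y⟩} u(x) dx`. -/
def ftr {n : ℕ} (u : En n → ℝ) (y : En n) : ℂ :=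
  (((2 * Real.pi) ^ (-(n : ℝ) / 2) : ℝ) : ℂ) *
    ∫ x : En n, Complex.exp (-Complex.I * (⟪x, y⟫ : ℝ)) * (u x : ℂ)


/-- Homogeneous functions: bounds on derivatives. -/
theorem aux_hom_bound {n : ℕ} {W : Type*} [NormedAddCommGroup W] [NormedSpace ℝ W]
    (U : En n → W) (hU : ContDiffOn ℝ (⊤ : ℕ∞) U {y : En n | y ≠ 0}) (d : ℕ)
    (hom : ∀ c : ℝ, 0 < c → ∀ y : En n, y ≠ 0 → c ^ d • U (c • y) = U y) (N : ℕ) :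
    ∃ C : ℝ, 0 ≤ C ∧ ∀ y : En n, y ≠ 0 →
      ‖iteratedFDeriv ℝ N U y‖ ≤ C * (‖y‖ ^ (N + d))⁻¹ := by
  have hopen : IsOpen {y : En n | y ≠ 0} := isOpen_ne
  have hcont : ContinuousOn (iteratedFDeriv ℝ N U) {y : En n | y ≠ 0} := by
    have h1 := hU.continuousOn_iteratedFDerivWithin (m := N) (by exact_mod_cast le_top)
      hopen.uniqueDiffOn
    exact h1.congr (fun y hy => (iteratedFDerivWithin_of_isOpen N hopen hy).symm)
  obtain ⟨C, hC⟩ := (isCompact_sphere (0 : En n) 1).exists_bound_of_continuousOn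
    (hcont.mono (fun y hy => by
      rintro rfl
      simp at hy))
  refine ⟨max C 0, le_max_right _ _, fun y hy => ?_⟩
  have hc : 0 < ‖y‖ := norm_pos_iff.mpr hy
  set c := ‖y‖ with hcdef
  set z : En n := c⁻¹ • y with hz
  have hzn : ‖z‖ = 1 := by
    rw [hz, norm_smul, norm_inv, Real.norm_of_nonneg hc.le, ← hcdef, inv_mul_cancel₀ hc.ne']
  have hz0 : z ≠ 0 := by
    intro h
    rw [h] at hzn
    simp at hzn
  have hyz : y = c • z := by
    rw [hz, smul_smul, mul_inv_cancel₀ hc.ne', one_smul]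
  let e : En n ≃L[ℝ] En n := ContinuousLinearEquiv.smulLeft (Units.mk0 c hc.ne')
  have he : ∀ x, e x = c • x := fun x => rfl
  have hpre : e ⁻¹' {y : En n | y ≠ 0} = {y : En n | y ≠ 0} := by
    ext x
    simp [he, hc.ne']
  have h1 := e.iteratedFDerivWithin_comp_right U hopen.uniqueDiffOn (x := z)
    (by rw [he, ← hyz]; exact hy) N
  rw [hpre, iteratedFDerivWithin_of_isOpen N hopen hz0, he, ← hyz,
    iteratedFDerivWithin_of_isOpen N hopen hy] at h1
  have hsm : ContDiffAt ℝ N (U ∘ e) z := by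
    have : ContDiffAt ℝ N U (e z) := by
      rw [he, ← hyz]
      exact (hU.contDiffAt (hopen.mem_nhds hy)).of_le (by exact_mod_cast le_top)
    exact this.comp z e.contDiff.contDiffAt
  have h2 : iteratedFDeriv ℝ N U z = c ^ d • iteratedFDeriv ℝ N (U ∘ e) z := by
    rw [← iteratedFDeriv_const_smul_apply hsm]
    apply Filter.EventuallyEq.eq_of_nhds
    apply Filter.EventuallyEq.iteratedFDeriv
    filter_upwards [hopen.mem_nhds hz0] with x hx
    simp [he, hom c hc x hx]
  have h3 : (iteratedFDeriv ℝ N U y).compContinuousLinearMap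
      (fun _ => (e : En n →L[ℝ] En n)) = c ^ N • iteratedFDeriv ℝ N U y := by
    ext m
    simp only [ContinuousMultilinearMap.compContinuousLinearMap_apply,
      smul_apply]
    have := (iteratedFDeriv ℝ N U y).map_smul_univ (fun _ => c) m
    simpa [he] using this
  rw [h1] at h2
  erw [h3] at h2
  have h4 := hC z (by simp [hzn])
  rw [h2, norm_smul, norm_smul, norm_pow, norm_pow, Real.norm_of_nonneg hc.le] at h4
  rw [← div_eq_mul_inv, le_div_iff₀ (by positivity)]
  calc _ = c ^ d * (c ^ N * ‖iteratedFDeriv ℝ N U y‖) := by ring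
    _ ≤ C := h4
    _ ≤ _ := le_max_left _ _

theorem aux_DopList {n : ℕ} (u : En n → ℂ)
    (hu : ContDiffOn ℝ (⊤ : ℕ∞) u {y : En n | y ≠ 0}) (l : List (Fin n)) :
    ∀ y : En n, y ≠ 0 → DopList l u y = (-Complex.I) ^ l.length *
      iteratedFDeriv ℝ l.length u y (fun r => EuclideanSpace.single (l.get r) 1) := by
  have hopen : IsOpen {y : En n | y ≠ 0} := isOpen_ne
  induction l with
  | nil => intro y hy; simp [DopList]
  | cons j l ih =>
    intro y hy
    have hd : DifferentiableAt ℝ (iteratedFDeriv ℝ l.length u) y := by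
      have h := (hu.contDiffAt (hopen.mem_nhds hy))
      exact h.differentiableAt_iteratedFDeriv (by exact_mod_cast ENat.natCast_lt_top _)
    have h1 : pdC j (DopList l u) y = (-Complex.I) ^ l.length *
        fderiv ℝ (iteratedFDeriv ℝ l.length u) y (EuclideanSpace.single j 1)
          (fun r => EuclideanSpace.single (l.get r) 1) := by
      unfold pdC
      have heq : DopList l u =ᶠ[nhds y] fun x => (-Complex.I) ^ l.length *
        iteratedFDeriv ℝ l.length u x (fun r => EuclideanSpace.single (l.get r) 1) := by
        filter_upwards [hopen.mem_nhds hy] with x hx using ih x hx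
      rw [heq.fderiv_eq]
      have h5 := hd.hasFDerivAt.continuousMultilinear_apply_const
        (fun r => (EuclideanSpace.single (l.get r) 1 : En n))
      have h6 := h5.const_mul ((-Complex.I) ^ l.length)
      rw [h6.fderiv]
      simp
    change (-Complex.I) * pdC j (DopList l u) y = _
    rw [h1]
    simp only [List.length_cons]
    rw [iteratedFDeriv_succ_apply_left, pow_succ]
    have : Fin.tail (fun r : Fin (l.length + 1) => (EuclideanSpace.single ((j :: l).get r) 1 : En n))
      = fun r => EuclideanSpace.single (l.get r) 1 := by
      ext r
      simp [Fin.tail]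
    rw [this]
    simp
    ring

/-- All estimates for a single component. -/
theorem aux_component {n : ℕ} {W : Type*} [NormedAddCommGroup W] [NormedSpace ℝ W]
    (U : En n → W →L[ℝ] ℂ) (hU : ContDiffOn ℝ (⊤ : ℕ∞) U {y : En n | y ≠ 0}) (d : ℕ)
    (hom : ∀ c : ℝ, 0 < c → ∀ y : En n, y ≠ 0 → c ^ d • U (c • y) = U y)
    (F : En n → W) (hF : ContDiff ℝ (⊤ : ℕ∞) F)
    (hdecay : ∀ N : ℕ, ∃ C : ℝ, ∀ y, ‖y‖ ^ N * ‖F y‖ ≤ C)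
    (u : En n → ℂ) (hu : ∀ y, y ≠ 0 → u y = U y (F y)) :
    ContDiffOn ℝ (⊤ : ℕ∞) u {y : En n | y ≠ 0} ∧
    (∀ N : ℕ, ∃ C : ℝ, ∀ y : En n, 1 ≤ ‖y‖ → ‖u y‖ ≤ C * ‖y‖ ^ (-(N : ℝ))) ∧
    (∀ l : List (Fin n), ∃ C : ℝ, ∀ y : En n, y ≠ 0 → ‖y‖ ≤ 1 →
      ‖DopList l u y‖ ≤ C * ‖y‖ ^ (-(l.length : ℝ) - d)) := by
  have hopen : IsOpen {y : En n | y ≠ 0} := isOpen_ne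
  have hus : ContDiffOn ℝ (⊤ : ℕ∞) u {y : En n | y ≠ 0} :=
    (hU.clm_apply hF.contDiffOn).congr hu
  choose B hB0 hB using fun N => aux_hom_bound U hU d hom N
  refine ⟨hus, ?_, ?_⟩
  · intro N
    obtain ⟨C, hC⟩ := hdecay N
    refine ⟨B 0 * C, fun y hy => ?_⟩
    have hy0 : y ≠ 0 := by
      rintro rfl
      simp at hy
      linarith
    have hp : 0 < ‖y‖ := by linarith
    have hUy : ‖U y‖ ≤ B 0 := by
      have := hB 0 y hy0
      rw [norm_iteratedFDeriv_zero] at this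
      refine this.trans (mul_le_of_le_one_right (hB0 0) ?_)
      exact inv_le_one_of_one_le₀ (one_le_pow₀ hy)
    have hFy : ‖F y‖ ≤ C * ‖y‖ ^ (-(N : ℝ)) := by
      rw [Real.rpow_neg hp.le, Real.rpow_natCast, ← div_eq_mul_inv, le_div_iff₀ (by positivity),
        mul_comm]
      exact hC y
    rw [hu y hy0, mul_assoc]
    exact ((U y).le_opNorm _).trans (mul_le_mul hUy hFy (norm_nonneg _) (hB0 0))
  · intro l
    have hK : ∀ N : ℕ, ∃ K : ℝ, ∀ y : En n, ‖y‖ ≤ 1 → ‖iteratedFDeriv ℝ N F y‖ ≤ K := by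
      intro N
      obtain ⟨K, hK⟩ := (isCompact_closedBall (0 : En n) 1).exists_bound_of_continuousOn
        (hF.continuous_iteratedFDeriv (m := N) (by exact_mod_cast le_top)).continuousOn
      exact ⟨K, fun y hy => hK y (by simpa using hy)⟩
    choose K hK using hK
    refine ⟨∑ i ∈ Finset.range (l.length + 1), (l.length.choose i : ℝ) * B i * K (l.length - i),
      fun y hy hy1 => ?_⟩
    have hp : 0 < ‖y‖ := norm_pos_iff.mpr hy
    rw [aux_DopList u hus l y hy, norm_mul, norm_pow, norm_neg, Complex.norm_I, one_pow, one_mul]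
    have h1 : ‖iteratedFDeriv ℝ l.length u y (fun r => EuclideanSpace.single (l.get r) 1)‖
        ≤ ‖iteratedFDeriv ℝ l.length u y‖ := by
      refine (ContinuousMultilinearMap.le_opNorm _ _).trans ?_
      simp
    have h2 : iteratedFDeriv ℝ l.length u y =
        iteratedFDerivWithin ℝ l.length (fun y => U y (F y)) {y : En n | y ≠ 0} y := by
      rw [iteratedFDerivWithin_of_isOpen _ hopen hy]
      apply Filter.EventuallyEq.eq_of_nhds
      apply Filter.EventuallyEq.iteratedFDeriv
      filter_upwards [hopen.mem_nhds hy] with x hx using hu x hx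
    have h3 := norm_iteratedFDerivWithin_clm_apply hU hF.contDiffOn hopen.uniqueDiffOn hy
      (n := l.length) (by exact_mod_cast le_top)
    have hpow : ‖y‖ ^ (-(l.length : ℝ) - d) = (‖y‖ ^ (l.length + d))⁻¹ := by
      rw [← Real.rpow_natCast, ← Real.rpow_neg hp.le]
      congr 1
      push_cast
      ring
    refine h1.trans ?_
    rw [h2]
    refine h3.trans ?_
    rw [Finset.sum_mul, hpow]
    refine Finset.sum_le_sum fun i hi => ?_
    have hi' : i ≤ l.length := by
      have := Finset.mem_range.mp hi
      omega
    rw [iteratedFDerivWithin_of_isOpen _ hopen hy, iteratedFDerivWithin_of_isOpen _ hopen hy]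
    have h4 := hB i y hy
    have h5 := hK (l.length - i) y hy1
    have hK0 : 0 ≤ K (l.length - i) := (norm_nonneg _).trans h5
    have h6 : (‖y‖ ^ (i + d))⁻¹ ≤ (‖y‖ ^ (l.length + d))⁻¹ := by
      apply inv_anti₀ (by positivity)
      exact pow_le_pow_of_le_one hp.le hy1 (by omega)
    calc _ ≤ (l.length.choose i : ℝ) * (B i * (‖y‖ ^ (l.length + d))⁻¹) * K (l.length - i) := by
          have := hB0 i
          gcongr
          exact h4.trans (mul_le_mul_of_nonneg_left h6 (hB0 i))
      _ = _ := by ring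

theorem aux_ftr {n : ℕ} (u : En n → ℝ) (hu : ∃ φ : SchwartzMap (En n) ℝ, ⇑φ = u) :
    ∃ ψ : SchwartzMap (En n) ℂ, ⇑ψ = ftr u := by
  obtain ⟨φ, rfl⟩ := hu
  let φc : SchwartzMap (En n) ℂ := SchwartzMap.postcompCLM (𝕜 := ℝ) Complex.ofRealCLM φ
  have hpi : (2 * Real.pi)⁻¹ ≠ 0 := by positivity
  let e : En n ≃L[ℝ] En n := ContinuousLinearEquiv.smulLeft (Units.mk0 ((2 * Real.pi)⁻¹) hpi)
  have he : ∀ x, e x = (2 * Real.pi)⁻¹ • x := fun x => rfl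
  refine ⟨(((2 * Real.pi) ^ (-(n : ℝ) / 2) : ℝ) : ℂ) •
    SchwartzMap.compCLMOfContinuousLinearEquiv ℂ e (FourierTransform.fourier φc), ?_⟩
  funext y
  simp only [smul_apply, SchwartzMap.compCLMOfContinuousLinearEquiv_apply,
    Function.comp_apply, smul_eq_mul, ftr]
  congr 1
  rw [SchwartzMap.fourier_coe, Real.fourier_eq']
  congr 1
  funext x
  rw [he, inner_smul_right, smul_eq_mul]
  congr 2
  have : (Real.pi : ℂ) ≠ 0 := by exact_mod_cast Real.pi_ne_zero
  push_cast
  field_simp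

theorem aux_symz_symm {n m : ℕ} {α : Type*} [AddCommMonoid α] [Module ℝ α]
    (F : (Fin m → Fin n) → α) (π : Equiv.Perm (Fin m)) (i : Fin m → Fin n) :
    symz F (i ∘ π) = symz F i := by
  unfold symz
  congr 1
  exact Fintype.sum_equiv (Equiv.mulLeft π) _ _ (fun σ => rfl)

theorem aux_symz_of_symm {n m : ℕ} (F : (Fin m → Fin n) → ℂ) (hF : IsSymTensorC F) :
    symz F = F := by
  funext i
  unfold symz
  have h : ∀ π : Equiv.Perm (Fin m), F (i ∘ π) = F i := fun π => hF π i
  simp only [h, Finset.sum_const, Finset.card_univ, Fintype.card_perm, Fintype.card_fin]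
  have : (m.factorial : ℂ) ≠ 0 := by exact_mod_cast m.factorial_ne_zero
  simp [this]

theorem aux_symz_pair {n m : ℕ} {A : Type*} [CommRing A] [Algebra ℝ A]
    (T G : (Fin m → Fin n) → A)
    (hG : ∀ (π : Equiv.Perm (Fin m)) (i : Fin m → Fin n), G (i ∘ π) = G i) :
    ∑ b, symz T b * G b = ∑ b, T b * G b := by
  unfold symz
  simp only [smul_mul_assoc, Finset.sum_mul]
  rw [← Finset.smul_sum, Finset.sum_comm]
  have h : ∀ π : Equiv.Perm (Fin m), ∑ b, T (b ∘ π) * G b = ∑ b, T b * G b := by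
    intro π
    refine Fintype.sum_equiv (Equiv.arrowCongr π.symm (Equiv.refl _)) _ _ (fun b => ?_)
    have : (Equiv.arrowCongr π.symm (Equiv.refl (Fin n))) b = b ∘ π := by
      funext r
      simp
    rw [this, hG]
  simp only [h, Finset.sum_const, Finset.card_univ, Fintype.card_perm, Fintype.card_fin]
  rw [← Nat.cast_smul_eq_nsmul ℝ, smul_smul, inv_mul_cancel₀, one_smul]
  exact_mod_cast m.factorial_ne_zero

theorem aux_sum_append {n p k : ℕ} {A : Type*} [AddCommMonoid A]
    (H : (Fin (p + k) → Fin n) → A) :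
    ∑ b, H b = ∑ a : Fin p → Fin n, ∑ j : Fin k → Fin n, H (Fin.append a j) := by
  rw [← Fintype.sum_prod_type']
  exact (Fintype.sum_equiv (Fin.appendEquiv p k) _ _ (fun x => rfl)).symm

theorem aux_perm_of_count {n p : ℕ} (a b : Fin p → Fin n)
    (h : ∑ r, Finsupp.single (a r) 1 = (∑ r, Finsupp.single (b r) 1 : Fin n →₀ ℕ)) :
    ∃ π : Equiv.Perm (Fin p), a = b ∘ π := by
  have hc : ∀ c, Fintype.card {r // a r = c} = Fintype.card {r // b r = c} := by
    intro c
    have := DFunLike.congr_fun h c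
    simpa [Finsupp.finsetSum_apply, Finsupp.single_apply, Fintype.card_subtype] using this
  let e : ∀ c, {r // a r = c} ≃ {r // b r = c} := fun c => Fintype.equivOfCardEq (hc c)
  refine ⟨Equiv.ofFiberEquiv e, ?_⟩
  funext r
  exact (Equiv.ofFiberEquiv_map e r).symm

theorem aux_poly_inj {n p : ℕ} (V : (Fin p → Fin n) → ℂ) (hV : IsSymTensorC V)
    (h : ∑ a, MvPolynomial.C (V a) * ∏ r, (MvPolynomial.X (a r) : MvPolynomial (Fin n) ℂ) = 0) :
    V = 0 := by
  classical
  funext b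
  have hm : ∀ a : Fin p → Fin n,
      MvPolynomial.C (V a) * ∏ r, (MvPolynomial.X (a r) : MvPolynomial (Fin n) ℂ)
        = MvPolynomial.monomial (∑ r, Finsupp.single (a r) 1) (V a) := by
    intro a
    rw [MvPolynomial.monomial_sum_index]
    rfl
  simp only [hm] at h
  have h2 := congrArg (MvPolynomial.coeff (∑ r, Finsupp.single (b r) 1)) h
  rw [MvPolynomial.coeff_sum] at h2
  simp only [MvPolynomial.coeff_monomial, MvPolynomial.coeff_zero] at h2
  have h3 : ∀ a : Fin p → Fin n,
      (if (∑ r, Finsupp.single (a r) 1 : Fin n →₀ ℕ) = ∑ r, Finsupp.single (b r) 1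
        then V a else 0) =
      (if (∑ r, Finsupp.single (a r) 1 : Fin n →₀ ℕ) = ∑ r, Finsupp.single (b r) 1
        then V b else 0) := by
    intro a
    split_ifs with hab
    · obtain ⟨π, rfl⟩ := aux_perm_of_count a b hab
      exact hV π b
    · rfl
  simp only [h3] at h2
  rw [← Finset.sum_filter, Finset.sum_const, smul_eq_zero] at h2
  rcases h2 with h2 | h2
  · exfalso
    rw [Finset.card_eq_zero] at h2
    have : b ∈ (∅ : Finset (Fin p → Fin n)) := by
      rw [← h2]
      simp
    simp at this
  · exact h2

theorem aux_i_inj {n p k : ℕ} (y : En n) (hy : y ≠ 0) (V : (Fin p → Fin n) → ℂ)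
    (hV : IsSymTensorC V) (h : iPowTensC (k := k) y V = 0) : V = 0 := by
  apply aux_poly_inj V hV
  let T : (Fin (p + k) → Fin n) → ℂ := fun i =>
    (∏ r : Fin k, (y (i (Fin.natAdd p r)) : ℂ)) * V (fun s => i (Fin.castAdd k s))
  let G : (Fin (p + k) → Fin n) → MvPolynomial (Fin n) ℂ := fun i => ∏ r, MvPolynomial.X (i r)
  have hG : ∀ (π : Equiv.Perm (Fin (p + k))) (i : Fin (p + k) → Fin n), G (i ∘ π) = G i := by
    intro π i
    exact Equiv.prod_comp π (fun r => (MvPolynomial.X (i r) : MvPolynomial (Fin n) ℂ))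
  have h1 := aux_symz_pair (fun i => MvPolynomial.C (T i)) G hG
  have h2 : symz (fun i => (MvPolynomial.C (T i) : MvPolynomial (Fin n) ℂ)) = 0 := by
    funext i
    have h3 : symz T i = 0 := congrFun h i
    have h4 : symz (fun i => (MvPolynomial.C (T i) : MvPolynomial (Fin n) ℂ)) i
        = MvPolynomial.C (symz T i) := by
      simp only [symz, ← map_sum]
      exact MvPolynomial.smul_monomial _
    rw [h4, h3]
    simp
  rw [h2] at h1
  simp only [Pi.zero_apply, zero_mul, Finset.sum_const_zero] at h1
  rw [aux_sum_append] at h1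
  have h5 : ∑ a : Fin p → Fin n, ∑ j : Fin k → Fin n,
      MvPolynomial.C (T (Fin.append a j)) * G (Fin.append a j) =
      (∑ a, MvPolynomial.C (V a) * ∏ r, (MvPolynomial.X (a r) : MvPolynomial (Fin n) ℂ)) *
      (∑ c, MvPolynomial.C (y c : ℂ) * (MvPolynomial.X c : MvPolynomial (Fin n) ℂ)) ^ k := by
    rw [Fintype.sum_pow, Finset.sum_mul_sum]
    refine Finset.sum_congr rfl fun a _ => Finset.sum_congr rfl fun j _ => ?_
    simp only [T, G, Fin.append_right, Fin.append_left, Fin.prod_univ_add, map_mul, map_prod,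
      Finset.prod_mul_distrib]
    ring
  rw [h5] at h1
  rcases mul_eq_zero.mp h1.symm with h6 | h6
  · exact h6
  · exfalso
    apply hy
    have h7 : ∑ c, MvPolynomial.C (y c : ℂ) * (MvPolynomial.X c : MvPolynomial (Fin n) ℂ) = 0 := by
      by_contra hne
      exact pow_ne_zero k hne h6
    ext c
    have h8 := congrArg (MvPolynomial.coeff (Finsupp.single c 1)) h7
    rw [MvPolynomial.coeff_sum] at h8
    simpa [MvPolynomial.coeff_C_mul, MvPolynomial.coeff_X', Finsupp.single_left_inj] using h8

theorem aux_ji_inj {n p k : ℕ} (y : En n) (hy : y ≠ 0) (V : (Fin p → Fin n) → ℂ)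
    (hV : IsSymTensorC V) (h : symz (jPowTensC (k := k) y (iPowTensC (k := k) y V)) = 0) :
    V = 0 := by
  apply aux_i_inj (k := k) y hy V hV
  let T : (Fin (p + k) → Fin n) → ℂ := fun i =>
    (∏ r : Fin k, (y (i (Fin.natAdd p r)) : ℂ)) * V (fun s => i (Fin.castAdd k s))
  have h1 := aux_symz_pair T (fun b => (starRingEnd ℂ) (symz T b))
    (fun π i => by rw [aux_symz_symm])
  have h0 := aux_symz_pair (jPowTensC (k := k) y (iPowTensC (k := k) y V))
    (fun b => (starRingEnd ℂ) (V b)) (fun π i => by rw [hV])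
  rw [h] at h0
  simp only [Pi.zero_apply, zero_mul, Finset.sum_const_zero] at h0
  have h2 : ∑ b, T b * (starRingEnd ℂ) (symz T b) = 0 := by
    have h3 := congrArg (starRingEnd ℂ) h0.symm
    rw [map_zero, map_sum] at h3
    rw [aux_sum_append, ← h3]
    refine Finset.sum_congr rfl fun a _ => ?_
    rw [map_mul, Complex.conj_conj, jPowTensC, map_sum, Finset.sum_mul]
    refine Finset.sum_congr rfl fun j _ => ?_
    have h4 : iPowTensC (k := k) y V = symz T := rfl
    rw [h4]
    simp only [T, Fin.append_right, Fin.append_left, map_mul, map_prod, Complex.conj_ofReal]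
    ring
  rw [h2] at h1
  simp only [Complex.mul_conj] at h1
  have h5 : ∑ b, Complex.normSq (symz T b) = 0 := by exact_mod_cast h1
  rw [Finset.sum_eq_zero_iff_of_nonneg (fun _ _ => Complex.normSq_nonneg _)] at h5
  funext b
  exact Complex.normSq_eq_zero.mp (h5 b (Finset.mem_univ _))

/-- Symmetrization as a continuous linear map. -/
def auxS (n p : ℕ) : ((Fin p → Fin n) → ℂ) →L[ℝ] ((Fin p → Fin n) → ℂ) :=
  LinearMap.toContinuousLinearMap
    { toFun := fun V => symz V
      map_add' := fun V W => by
        funext i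
        simp [symz, Finset.sum_add_distrib]
      map_smul' := fun c V => by
        funext i
        simp only [symz, Pi.smul_apply, ← Finset.smul_sum, RingHom.id_apply]
        rw [smul_comm] }

/-- Symmetric multiplication as a continuous linear map. -/
def auxI (n p k : ℕ) (y : En n) :
    ((Fin p → Fin n) → ℂ) →L[ℝ] ((Fin (p + k) → Fin n) → ℂ) :=
  LinearMap.toContinuousLinearMap
    { toFun := fun V => iPowTensC y V
      map_add' := fun V W => by
        funext i
        simp [iPowTensC, symz, Finset.sum_add_distrib, mul_add]
      map_smul' := fun c V => by
        funext i
        simp only [iPowTensC, symz, Pi.smul_apply, mul_smul_comm, ← Finset.smul_sum,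
          RingHom.id_apply]
        rw [smul_comm] }

/-- Contraction as a continuous linear map. -/
def auxJ (n p k : ℕ) (y : En n) :
    ((Fin (p + k) → Fin n) → ℂ) →L[ℝ] ((Fin p → Fin n) → ℂ) :=
  LinearMap.toContinuousLinearMap
    { toFun := fun V => jPowTensC y V
      map_add' := fun V W => by
        funext i
        simp [jPowTensC, Finset.sum_add_distrib, mul_add]
      map_smul' := fun c V => by
        funext i
        simp only [jPowTensC, Pi.smul_apply, mul_smul_comm, ← Finset.smul_sum,
          RingHom.id_apply] }

theorem auxS_apply {n p : ℕ} (V : (Fin p → Fin n) → ℂ) : auxS n p V = symz V := rfl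

theorem auxI_apply {n p k : ℕ} (y : En n) (V : (Fin p → Fin n) → ℂ) :
    auxI n p k y V = iPowTensC y V := rfl

theorem auxJ_apply {n p k : ℕ} (y : En n) (V : (Fin (p + k) → Fin n) → ℂ) :
    auxJ n p k y V = jPowTensC y V := rfl

theorem aux_coord_contDiff {n : ℕ} (c : Fin n) :
    ContDiff ℝ (⊤ : ℕ∞) (fun y : En n => ((y c : ℝ) : ℂ)) :=
  (Complex.ofRealCLM.contDiff).comp (EuclideanSpace.proj (𝕜 := ℝ) c).contDiff

theorem auxI_contDiff (n p k : ℕ) : ContDiff ℝ (⊤ : ℕ∞) (auxI n p k) := by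
  rw [contDiff_clm_apply_iff]
  intro V
  rw [contDiff_pi]
  intro i
  simp only [auxI_apply, iPowTensC, symz]
  refine ContDiff.const_smul _ (ContDiff.sum fun π _ => ContDiff.mul ?_ contDiff_const)
  exact contDiff_prod fun r _ => aux_coord_contDiff _

theorem auxJ_contDiff (n p k : ℕ) : ContDiff ℝ (⊤ : ℕ∞) (auxJ n p k) := by
  rw [contDiff_clm_apply_iff]
  intro V
  rw [contDiff_pi]
  intro i
  simp only [auxJ_apply, jPowTensC]
  refine ContDiff.sum fun π _ => ContDiff.mul ?_ contDiff_const
  exact contDiff_prod fun r _ => aux_coord_contDiff _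

theorem auxI_smul {n p k : ℕ} (c : ℝ) (y : En n) : auxI n p k (c • y) = c ^ k • auxI n p k y := by
  ext V i
  simp only [auxI_apply, iPowTensC, symz, smul_apply, Pi.smul_apply,
    PiLp.smul_apply, smul_eq_mul, Complex.ofReal_mul, Finset.prod_mul_distrib, Finset.prod_const,
    Finset.card_univ, Fintype.card_fin]
  rw [smul_comm (c ^ k)]
  congr 1
  rw [Finset.smul_sum]
  refine Finset.sum_congr rfl fun π _ => ?_
  rw [Complex.real_smul]
  push_cast
  ring

theorem auxJ_smul {n p k : ℕ} (c : ℝ) (y : En n) : auxJ n p k (c • y) = c ^ k • auxJ n p k y := by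
  ext V i
  simp only [auxJ_apply, jPowTensC, smul_apply, Pi.smul_apply,
    PiLp.smul_apply, smul_eq_mul, Complex.ofReal_mul, Finset.prod_mul_distrib, Finset.prod_const,
    Finset.card_univ, Fintype.card_fin]
  rw [Finset.smul_sum]
  refine Finset.sum_congr rfl fun π _ => ?_
  rw [Complex.real_smul]
  push_cast
  ring

/-- The operator to be inverted. -/
def auxM (n p k : ℕ) (y : En n) : ((Fin p → Fin n) → ℂ) →L[ℝ] ((Fin p → Fin n) → ℂ) :=
  ((auxS n p).comp ((auxJ n p k y).comp ((auxI n p k y).comp (auxS n p))))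
    + ((‖y‖ ^ 2) ^ k) • (ContinuousLinearMap.id ℝ _ - auxS n p)

theorem auxM_contDiff (n p k : ℕ) : ContDiff ℝ (⊤ : ℕ∞) (auxM n p k) := by
  unfold auxM
  refine ContDiff.add ?_ ?_
  · exact contDiff_const.clm_comp ((auxJ_contDiff n p k).clm_comp
      ((auxI_contDiff n p k).clm_comp contDiff_const))
  · exact ((contDiff_norm_sq ℝ).pow k).smul contDiff_const

theorem auxM_smul {n p k : ℕ} (c : ℝ) (y : En n) :
    auxM n p k (c • y) = c ^ (2 * k) • auxM n p k y := by
  unfold auxM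
  rw [auxI_smul, auxJ_smul, norm_smul]
  simp only [ContinuousLinearMap.comp_smul, ContinuousLinearMap.smul_comp, smul_add, smul_smul]
  congr 2
  · ring
  · rw [mul_pow, Real.norm_eq_abs, sq_abs]
    ring

theorem auxM_isUnit {n p k : ℕ} (y : En n) (hy : y ≠ 0) : IsUnit (auxM n p k y) := by
  have hinj : Function.Injective (auxM n p k y) := by
    rw [injective_iff_map_eq_zero]
    intro V hV
    have hSS : ∀ W : (Fin p → Fin n) → ℂ, auxS n p (auxS n p W) = auxS n p W := fun W =>
      aux_symz_of_symm _ (fun π i => aux_symz_symm W π i)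
    have h1 : auxS n p (auxJ n p k y (auxI n p k y (auxS n p V)))
      + ((‖y‖ ^ 2) ^ k) • (V - auxS n p V) = 0 := hV
    have h2 := congrArg (auxS n p) h1
    rw [map_add, map_smul, map_sub, hSS, hSS, sub_self, smul_zero, add_zero, map_zero] at h2
    have h3 : auxS n p V = 0 :=
      aux_ji_inj (k := k) y hy _ (fun π i => aux_symz_symm V π i) h2
    rw [h3] at h1
    simp only [map_zero, zero_add, sub_zero, smul_eq_zero] at h1
    rcases h1 with h1 | h1
    · exfalso
      have : 0 < ‖y‖ := norm_pos_iff.mpr hy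
      have : 0 < (‖y‖ ^ 2) ^ k := by positivity
      exact this.ne' h1
    · exact h1
  let e : ((Fin p → Fin n) → ℂ) ≃L[ℝ] ((Fin p → Fin n) → ℂ) :=
    (LinearEquiv.ofInjectiveEndo (auxM n p k y : ((Fin p → Fin n) → ℂ) →ₗ[ℝ] _)
      hinj).toContinuousLinearEquiv
  have he : (e : ((Fin p → Fin n) → ℂ) →L[ℝ] ((Fin p → Fin n) → ℂ)) = auxM n p k y := by
    ext V
    rfl
  rw [← he]
  exact ⟨(ContinuousLinearEquiv.unitsEquiv ℝ _).symm e, rfl⟩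

/-- The operator recovering `v` from `f`. -/
def auxB (n p k : ℕ) (y : En n) : ((Fin (p + k) → Fin n) → ℂ) →L[ℝ] ((Fin p → Fin n) → ℂ) :=
  (Ring.inverse (auxM n p k y)).comp ((auxS n p).comp (auxJ n p k y))

theorem auxB_contDiffOn (n p k : ℕ) :
    ContDiffOn ℝ (⊤ : ℕ∞) (auxB n p k) {y : En n | y ≠ 0} := by
  unfold auxB
  refine ContDiffOn.clm_comp ?_ (contDiff_const.clm_comp (auxJ_contDiff n p k)).contDiffOn
  intro y hy
  obtain ⟨w, hw⟩ := auxM_isUnit (p := p) (k := k) y hy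
  have h := contDiffAt_ringInverse ℝ w (n := (⊤ : ℕ∞))
  rw [hw] at h
  exact (h.comp y (auxM_contDiff n p k).contDiffAt).contDiffWithinAt

theorem auxB_hom {n p k : ℕ} (c : ℝ) (hc : 0 < c) (y : En n) (hy : y ≠ 0) :
    c ^ k • auxB n p k (c • y) = auxB n p k y := by
  have hinv : Ring.inverse (auxM n p k (c • y))
      = (c ^ (2 * k))⁻¹ • Ring.inverse (auxM n p k y) := by
    have hu := auxM_isUnit (p := p) (k := k) y hy
    have hu2 := auxM_isUnit (p := p) (k := k) (c • y) (smul_ne_zero hc.ne' hy)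
    have h1 : auxM n p k (c • y) * ((c ^ (2 * k))⁻¹ • Ring.inverse (auxM n p k y)) = 1 := by
      rw [auxM_smul, ContinuousLinearMap.mul_def, ContinuousLinearMap.smul_comp,
        ContinuousLinearMap.comp_smul, smul_smul, ← ContinuousLinearMap.mul_def,
        Ring.mul_inverse_cancel _ hu, mul_inv_cancel₀, one_smul]
      positivity
    calc _ = Ring.inverse (auxM n p k (c • y)) *
          (auxM n p k (c • y) * ((c ^ (2 * k))⁻¹ • Ring.inverse (auxM n p k y))) := by
            rw [h1, mul_one]
      _ = _ := by rw [← mul_assoc, Ring.inverse_mul_cancel _ hu2, one_mul]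
  unfold auxB
  rw [hinv, auxJ_smul]
  simp only [ContinuousLinearMap.comp_smul, ContinuousLinearMap.smul_comp, smul_smul]
  have : c ^ k * (c ^ k * (c ^ (2 * k))⁻¹) = 1 := by
    rw [← mul_assoc, ← pow_add, ← two_mul, mul_inv_cancel₀]
    positivity
  first
  | rw [this, one_smul]
  | (rw [show c ^ k * ((c ^ (2 * k))⁻¹ * c ^ k) = 1 by rw [mul_comm _ (c ^ k), this], one_smul])

theorem aux_tensNorm {n m : ℕ} (F : (Fin m → Fin n) → ℂ) : tensNormC F ≤ ∑ i, ‖F i‖ := by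
  unfold tensNormC
  rw [Real.sqrt_le_left (Finset.sum_nonneg fun _ _ => norm_nonneg _)]
  rw [sq, Finset.sum_mul]
  refine Finset.sum_le_sum fun i hi => ?_
  rw [sq]
  gcongr
  exact Finset.single_le_sum (f := fun i => ‖F i‖) (fun _ _ => norm_nonneg _) hi

theorem aux_length {n : ℕ} (α : Fin n → ℕ) : (mIdxList α).length = ∑ r, α r := by
  simp [mIdxList, List.length_flatMap, Fin.sum_univ_def]

/-- smoothness, rapid decay, and near-origin estimates for the
Fourier side pointwise decomposition `f̂(y) = ĝ(y) + i_{y^{⊗k}} v̂(y)`,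
`j_{y^{⊗k}} ĝ(y) = 0`.  The rank is `m = p + k` (so `k ≤ m`), and
`1 ≤ k ≤ n − 1` is expressed as `1 ≤ k` and `k + 1 ≤ n`. -/
theorem fourier_decomposition_estimates
    (n p k : ℕ) (hk1 : 1 ≤ k) (hkn : k + 1 ≤ n)
    (f : (Fin (p + k) → Fin n) → En n → ℝ)
    (hf : IsSchwartzField f) (hfsym : IsSymField f)
    (gh : (Fin (p + k) → Fin n) → En n → ℂ) (vh : (Fin p → Fin n) → En n → ℂ)
    (hdec : ∀ y : En n, y ≠ 0 →
      (∀ i, ftr (f i) y = gh i y + iPowTensC (m := p) (k := k) y (fun j => vh j y) i) ∧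
      (∀ i, jPowTensC (m := p) (k := k) y (fun j => gh j y) i = 0) ∧
      IsSymTensorC (fun i => gh i y) ∧ IsSymTensorC (fun j => vh j y)) :
    (∀ i, ContDiffOn ℝ (⊤ : ℕ∞) (gh i) {y : En n | y ≠ 0}) ∧
    (∀ j, ContDiffOn ℝ (⊤ : ℕ∞) (vh j) {y : En n | y ≠ 0}) ∧
    (∀ N : ℕ, ∃ C : ℝ, ∀ y : En n, 1 ≤ ‖y‖ →
      tensNormC (fun i => gh i y) ≤ C * ‖y‖ ^ (-(N : ℝ)) ∧
      tensNormC (fun j => vh j y) ≤ C * ‖y‖ ^ (-(N : ℝ))) ∧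
    (∀ α : Fin n → ℕ, ∃ C : ℝ, ∀ y : En n, y ≠ 0 → ‖y‖ ≤ 1 →
      tensNormC (fun i => Dpow α (gh i) y) ≤ C * ‖y‖ ^ (-((∑ r, α r : ℕ) : ℝ)) ∧
      tensNormC (fun j => Dpow α (vh j) y)
        ≤ C * ‖y‖ ^ (-((∑ r, α r : ℕ) : ℝ) - k)) := by
  classical
  choose ψ hψ using fun i => aux_ftr (f i) (hf i)
  let F : En n → ((Fin (p + k) → Fin n) → ℂ) := fun y i => ftr (f i) y
  have hF : ContDiff ℝ (⊤ : ℕ∞) F := by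
    rw [contDiff_pi]
    intro i
    change ContDiff ℝ (⊤ : ℕ∞) (ftr (f i))
    rw [← hψ i]
    exact (ψ i).smooth _
  have hdecay : ∀ N : ℕ, ∃ C : ℝ, ∀ y, ‖y‖ ^ N * ‖F y‖ ≤ C := by
    intro N
    choose C hC using fun i => (ψ i).decay N 0
    refine ⟨∑ i, C i, fun y => ?_⟩
    have h1 : ‖F y‖ ≤ ∑ i, ‖F y i‖ := by
      rw [pi_norm_le_iff_of_nonneg (Finset.sum_nonneg fun _ _ => norm_nonneg _)]
      exact fun i => Finset.single_le_sum (f := fun i => ‖F y i‖) (fun _ _ => norm_nonneg _)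
        (Finset.mem_univ i)
    calc _ ≤ ‖y‖ ^ N * ∑ i, ‖F y i‖ := by gcongr
      _ = ∑ i, ‖y‖ ^ N * ‖F y i‖ := Finset.mul_sum _ _ _
      _ ≤ _ := Finset.sum_le_sum fun i _ => by
        have := (hC i).2 y
        rw [norm_iteratedFDeriv_zero, hψ i] at this
        exact this
  have hv : ∀ y, y ≠ 0 → (fun j => vh j y) = auxB n p k y (F y) := by
    intro y hy
    obtain ⟨h1, h2, h3, h4⟩ := hdec y hy
    have hFy : F y = (fun i => gh i y) + auxI n p k y (fun j => vh j y) := by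
      funext i
      exact h1 i
    have hJ : auxJ n p k y (fun i => gh i y) = 0 := by
      funext i
      exact h2 i
    have hS : auxS n p (fun j => vh j y) = fun j => vh j y := aux_symz_of_symm _ h4
    have hM : auxM n p k y (fun j => vh j y) = auxS n p (auxJ n p k y (F y)) := by
      rw [hFy, map_add, hJ, zero_add]
      change auxS n p (auxJ n p k y (auxI n p k y (auxS n p (fun j => vh j y))))
        + ((‖y‖ ^ 2) ^ k) • ((fun j => vh j y) - auxS n p (fun j => vh j y)) = _
      rw [hS, sub_self, smul_zero, add_zero]
    change _ = Ring.inverse (auxM n p k y) (auxS n p (auxJ n p k y (F y)))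
    rw [← hM, ← ContinuousLinearMap.mul_apply,
      Ring.inverse_mul_cancel _ (auxM_isUnit (p := p) (k := k) y hy)]
    rfl
  let P : En n → ((Fin (p + k) → Fin n) → ℂ) →L[ℝ] ((Fin (p + k) → Fin n) → ℂ) := fun y =>
    ContinuousLinearMap.id ℝ _ - (auxI n p k y).comp (auxB n p k y)
  have hP : ContDiffOn ℝ (⊤ : ℕ∞) P {y : En n | y ≠ 0} :=
    contDiffOn_const.sub ((auxI_contDiff n p k).contDiffOn.clm_comp (auxB_contDiffOn n p k))
  have hPhom : ∀ c : ℝ, 0 < c → ∀ y : En n, y ≠ 0 → c ^ 0 • P (c • y) = P y := by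
    intro c hc y hy
    rw [pow_zero, one_smul]
    simp only [P]
    rw [auxI_smul, ContinuousLinearMap.smul_comp, ← ContinuousLinearMap.comp_smul,
      auxB_hom c hc y hy]
  have hg : ∀ y, y ≠ 0 → (fun i => gh i y) = P y (F y) := by
    intro y hy
    change _ = F y - auxI n p k y (auxB n p k y (F y))
    rw [← hv y hy]
    funext i
    exact eq_sub_of_add_eq ((hdec y hy).1 i).symm
  have G := fun i => aux_component
    (fun y => (ContinuousLinearMap.proj (R := ℝ) (φ := fun _ : Fin (p + k) → Fin n => ℂ) i).comp
      (P y)) (contDiffOn_const.clm_comp hP) 0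
    (fun c hc y hy => by rw [← ContinuousLinearMap.comp_smul, hPhom c hc y hy]) F hF hdecay (gh i)
    (fun y hy => congrFun (hg y hy) i)
  have V := fun j => aux_component
    (fun y => (ContinuousLinearMap.proj (R := ℝ) (φ := fun _ : Fin p → Fin n => ℂ) j).comp
      (auxB n p k y)) (contDiffOn_const.clm_comp (auxB_contDiffOn n p k)) k
    (fun c hc y hy => by rw [← ContinuousLinearMap.comp_smul, auxB_hom c hc y hy]) F hF hdecay
    (vh j) (fun y hy => congrFun (hv y hy) j)
  refine ⟨fun i => (G i).1, fun j => (V j).1, fun N => ?_, fun α => ?_⟩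
  · choose C hC using fun i => (G i).2.1 N
    choose D hD using fun j => (V j).2.1 N
    refine ⟨max (∑ i, C i) (∑ j, D j), fun y hy => ⟨?_, ?_⟩⟩
    · refine (aux_tensNorm _).trans ((Finset.sum_le_sum fun i _ => hC i y hy).trans ?_)
      rw [← Finset.sum_mul]
      gcongr
      exact le_max_left _ _
    · refine (aux_tensNorm _).trans ((Finset.sum_le_sum fun i _ => hD i y hy).trans ?_)
      rw [← Finset.sum_mul]
      gcongr
      exact le_max_right _ _
  · choose C hC using fun i => (G i).2.2 (mIdxList α)
    choose D hD using fun j => (V j).2.2 (mIdxList α)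
    rw [aux_length] at hC hD
    refine ⟨max (∑ i, C i) (∑ j, D j), fun y hy hy1 => ⟨?_, ?_⟩⟩
    · refine (aux_tensNorm _).trans ((Finset.sum_le_sum fun i _ => hC i y hy hy1).trans ?_)
      rw [← Finset.sum_mul, Nat.cast_zero, sub_zero]
      gcongr
      exact le_max_left _ _
    · refine (aux_tensNorm _).trans ((Finset.sum_le_sum fun i _ => hD i y hy hy1).trans ?_)
      rw [← Finset.sum_mul]
      gcongr
      exact le_max_right _ _
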